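/- Define the Ore-degree of a graph G as θ(G) = max over edges xy of d(x) + d(y). If G is a finite simple graph with 6 ≤ χ(G) = ⌊θ(G)/2⌋ + 1, then G contains K_{χ(G)} as a subgraph. -/

import Mathlib

open SimpleGraph

/-!
Let `n` be the number of colours, `n ≥ 5`, and let `G` be minimal non-`n`-colourable with all degree
sums along edges at most `2n + 1`. All degrees of vertices on edges are then `n` or `n + 1`, and the
vertices of degree `n + 1` are independent. Divide the colours into a pair and `n - 2 ≥ 3` further
ones. Every colouring of `G - x` divides the remaining vertices into two parts, called `false` and
`true`; following Mozhan, choose `x` and the colouring with as few edges inside the parts as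
possible. When `x` is put into either part, one may move along the edges of this part and leave
another vertex of the component of `x` uncoloured instead. In the part `false` this component is an
odd cycle; in the part `true` Brooks' theorem makes it a clique on `n - 1` vertices.

Take an edge `zy` of the cycle whose ends have degree `n`. Suppose that `z` and `y` have no common
neighbour in the part `true`. Leave `y` uncoloured and put it into the part `true`: the rest of the
cycle and the clique of `z` are then left behind for good. Exchanging the uncoloured vertex between
the two parts produces another such edge outside of the vertices left behind, and so on. These sets
of vertices grow strictly forever, which is impossible. Hence `z` and `y` have the same neighbours
in the part `true`, and moving one of these into the part `false` shows that the cycle is a triangle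
`zyq` and that `q` is adjacent to all of them that have degree `n`. At most one of them has degree
`n + 1`. If `q` is not adjacent to it, then the two have few neighbours outside of the clique of `z`
and `y`, so both can receive the same colour, which leaves enough colours for the clique.
-/

namespace MozhanPartition

open Finset Function
open scoped Classical

section Connectivity

variable {V : Type*} {K L : SimpleGraph V} {a b p v x y : V}

lemma mem_of_reachable {X : Set V} (hab : K.Reachable a b) (ha : a ∈ X)
    (hX : ∀ u ∈ X, ∀ v, K.Adj u v → v ∈ X) : b ∈ X := by
  rw [reachable_iff_reflTransGen] at hab
  induction hab with
  | refl => exact ha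
  | tail _ huv ih => exact hX _ ih _ huv

lemma reachable_of_forall_adj (hab : K.Reachable a b)
    (hKL : ∀ u v, K.Reachable a u → K.Adj u v → L.Adj u v) : L.Reachable a b :=
  (mem_of_reachable (X := {v | K.Reachable a v ∧ L.Reachable a v}) hab ⟨.rfl, .rfl⟩
    fun u hu v huv => ⟨hu.1.trans huv.reachable, hu.2.trans (hKL u v hu.1 huv).reachable⟩).2

lemma ne_of_reachable_deleteIncidenceSet (hay : a ≠ y)
    (hab : (K.deleteIncidenceSet y).Reachable a b) : b ≠ y :=
  mem_of_reachable (X := {v | v ≠ y}) hab hay fun _ _ _ huv => (deleteIncidenceSet_adj.1 huv).2.2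

lemma exists_adj_reachable_deleteIncidenceSet (hya : K.Reachable y a) (hay : a ≠ y) :
    ∃ q, K.Adj y q ∧ (K.deleteIncidenceSet y).Reachable a q := by
  by_contra! hcon
  refine ne_of_reachable_deleteIncidenceSet (K := K) hay (b := y) ?_ rfl
  refine mem_of_reachable (X := {v | (K.deleteIncidenceSet y).Reachable a v}) hya.symm .rfl ?_
  intro u hu v huv
  have huy := ne_of_reachable_deleteIncidenceSet hay hu
  have hvy : v ≠ y := by
    rintro rfl
    exact hcon u huv.symm hu
  exact Reachable.trans hu (deleteIncidenceSet_adj.2 ⟨huv, huy, hvy⟩).reachable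

variable [Fintype V]

lemma eq_or_eq_of_degree_eq_two (hv : K.degree v = 2) (hva : K.Adj v a) (hvb : K.Adj v b)
    (hab : a ≠ b) (hvx : K.Adj v x) : x = a ∨ x = b := by
  have hnbrs : {a, b} = K.neighborFinset v := by
    refine eq_of_subset_of_card_le ?_ ?_
    · simp [insert_subset_iff, hva, hvb]
    · rw [card_neighborFinset_eq_degree, hv, card_pair hab]
  have hx : x ∈ ({a, b} : Finset V) := hnbrs ▸ (mem_neighborFinset ..).2 hvx
  simpa using hx

lemma eq_or_eq_or_eq_of_reachable (ha : K.degree a = 2) (hb : K.degree b = 2) (hp : K.degree p = 2)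
    (hab : K.Adj a b) (hap : K.Adj a p) (hbp : K.Adj b p) (hax : K.Reachable a x) :
    x = a ∨ x = b ∨ x = p := by
  refine mem_of_reachable (X := {v | v = a ∨ v = b ∨ v = p}) hax (.inl rfl) ?_
  rintro u (rfl | rfl | rfl) v huv
  · exact .inr (eq_or_eq_of_degree_eq_two ha hab hap hbp.ne huv)
  · exact (eq_or_eq_of_degree_eq_two hb hab.symm hbp hap.ne huv).imp_right .inr
  · exact (eq_or_eq_of_degree_eq_two hp hap.symm hbp.symm hab.ne huv).imp_right .inl

lemma degree_deleteIncidenceSet_add_one (hxv : K.Adj x v) :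
    (K.deleteIncidenceSet x).degree v + 1 = K.degree v := by
  have hset : (K.deleteIncidenceSet x).neighborFinset v = (K.neighborFinset v).erase x := by
    ext w
    simp only [mem_neighborFinset, deleteIncidenceSet_adj, mem_erase]
    have := hxv.ne'
    tauto
  rw [← card_neighborFinset_eq_degree, hset, ← card_neighborFinset_eq_degree,
    card_erase_add_one ((mem_neighborFinset ..).2 hxv.symm)]

lemma degree_deleteIncidenceSet_of_not_adj (hvx : v ≠ x) (hxv : ¬ K.Adj x v) :
    (K.deleteIncidenceSet x).degree v = K.degree v := by
  have hset : (K.deleteIncidenceSet x).neighborFinset v = K.neighborFinset v := by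
    ext w
    simp only [mem_neighborFinset, deleteIncidenceSet_adj, and_iff_left_iff_imp]
    intro hvw
    refine ⟨hvx, ?_⟩
    rintro rfl
    exact hxv hvw.symm
  rw [← card_neighborFinset_eq_degree, hset, card_neighborFinset_eq_degree]

/- The component of `a` in `K - y` meets the neighbourhood of `y`, and by the handshake lemma it
does so an even number of times, hence it contains both neighbours of `y`. -/
lemma reachable_deleteIncidenceSet_of_adj (heven : ∀ v, K.Reachable y v → Even (K.degree v))
    (hy : K.degree y = 2) (hya : K.Reachable y a) (hay : a ≠ y) (hyp : K.Adj y p) :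
    (K.deleteIncidenceSet y).Reachable a p := by
  set K' := K.deleteIncidenceSet y
  set X : Set V := {v | K'.Reachable a v}
  have hreach : ∀ v ∈ X, K.Reachable y v := fun v hv =>
    hya.trans (Reachable.mono (deleteIncidenceSet_le K y) hv)
  have hdeg : ∀ v : X, (K'.induce X).degree v = K'.degree v := fun v =>
    degree_induce_of_neighborSet_subset fun w hvw =>
      Reachable.trans v.2 (Adj.reachable ((mem_neighborSet ..).1 hvw))
  obtain ⟨q, hyq, hq⟩ := exists_adj_reachable_deleteIncidenceSet hya hay
  have hqodd : Odd ((K'.induce X).degree ⟨q, hq⟩) := by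
    rw [hdeg, ← Nat.not_even_iff_odd, ← Nat.even_add_one, degree_deleteIncidenceSet_add_one hyq]
    exact heven q (hreach q hq)
  obtain ⟨⟨w, hw⟩, hwq, hwodd⟩ := exists_ne_odd_degree_of_exists_odd_degree _ _ hqodd
  have hyw : K.Adj y w := by
    by_contra hyw
    rw [hdeg, degree_deleteIncidenceSet_of_not_adj (ne_of_reachable_deleteIncidenceSet hay hw) hyw,
      ← Nat.not_even_iff_odd] at hwodd
    exact hwodd (heven w (hreach w hw))
  rcases eq_or_eq_of_degree_eq_two hy hyq hyw (by simpa using hwq.symm) hyp with rfl | rfl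
  · exact hq
  · exact hw

theorem reachable_deleteIncidenceSet_of_even_degree
    (heven : ∀ v, K.Reachable y v → Even (K.degree v)) (hy : K.degree y = 2)
    (hya : K.Reachable y a) (hay : a ≠ y) (hyb : K.Reachable y b) (hby : b ≠ y) :
    (K.deleteIncidenceSet y).Reachable a b := by
  obtain ⟨p, hyp, hbp⟩ := exists_adj_reachable_deleteIncidenceSet hyb hby
  exact (reachable_deleteIncidenceSet_of_adj heven hy hya hay hyp).trans hbp.symm

end Connectivity

section Partitions

variable {V ι α : Type*} {G : SimpleGraph V} {κ : α → ι} {t t' : V → ι} {i : ι}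
  {W W' : Set V} {u v w x y : V}

/-- The subgraph of the edges of `G` joining two vertices in the same part of the partition given
by `t : V → ι`. -/
def partGraph (G : SimpleGraph V) (t : V → ι) : SimpleGraph V where
  Adj v w := G.Adj v w ∧ t v = t w
  symm := ⟨fun _ _ h => ⟨h.1.symm, h.2.symm⟩⟩
  loopless := ⟨fun _ h => h.1.ne rfl⟩

lemma partGraph_adj : (partGraph G t).Adj v w ↔ G.Adj v w ∧ t v = t w := .rfl

lemma part_eq_of_reachable (h : (partGraph G t).Reachable v w) : t w = t v :=
  mem_of_reachable (X := {u | t u = t v}) h rfl fun _ hu _ hadj => hadj.2.symm.trans hu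

/-- The set `W` is a union of vertex sets of components of the parts of `t`. -/
def PartClosed (G : SimpleGraph V) (t : V → ι) (W : Set V) : Prop :=
  ∀ v ∈ W, ∀ w, (partGraph G t).Adj v w → w ∈ W

lemma PartClosed.of_subset (h : PartClosed G t W) (hWW' : W ⊆ W')
    (h' : PartClosed (G.deleteIncidenceSet u) t' W') (ht : ∀ v ∈ W', t' v = t v) :
    PartClosed (G.deleteIncidenceSet u) t' W := by
  intro v hv w hvw
  have hw := h' v (hWW' hv) w hvw
  refine h v hv w ⟨(deleteIncidenceSet_adj.1 hvw.1).1, ?_⟩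
  rw [← ht v (hWW' hv), ← ht w hw, hvw.2]

/-- `Splits G κ x t`: some colouring of `G - x` uses on each part of `t` only the colours that `κ`
assigns to this part. The part of `x` itself is arbitrary. -/
def Splits (G : SimpleGraph V) (κ : α → ι) (x : V) (t : V → ι) : Prop :=
  ∃ c : (G.deleteIncidenceSet x).Coloring α, ∀ v ≠ x, κ (c v) = t v

lemma Splits.congr (h : Splits G κ x t) (ht : ∀ v ≠ x, t' v = t v) : Splits G κ x t' :=
  h.imp fun _ hc v hv => (hc v hv).trans (ht v hv).symm

lemma color_ne (c : (G.deleteIncidenceSet x).Coloring α) (hvw : G.Adj v w) (hv : v ≠ x)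
    (hw : w ≠ x) : c v ≠ c w :=
  c.valid (deleteIncidenceSet_adj.2 ⟨hvw, hv, hw⟩)

/-- Recolouring `x` turns a colouring of `G - x` into a colouring of `G - y` as soon as `y` is the
only neighbour of `x` that may already have the new colour. -/
noncomputable def recolor (c : (G.deleteIncidenceSet x).Coloring α) (j : α)
    (hj : ∀ v, G.Adj x v → v ≠ y → c v ≠ j) : (G.deleteIncidenceSet y).Coloring α :=
  .mk (update c x j) fun {v w} hvw => by
    obtain ⟨hvw, hvy, hwy⟩ := deleteIncidenceSet_adj.1 hvw
    by_cases hvx : v = x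
    · subst hvx
      simpa [hvw.ne'] using (hj w hvw hwy).symm
    by_cases hwx : w = x
    · subst hwx
      simpa [hvw.ne] using hj v hvw.symm hvy
    simpa [hvx, hwx] using color_ne c hvw hvx hwx

lemma recolor_apply (c : (G.deleteIncidenceSet x).Coloring α) (j : α)
    (hj : ∀ v, G.Adj x v → v ≠ y → c v ≠ j) : recolor c j hj v = update c x j v := rfl

lemma exists_adj_color_eq (hG : IsEmpty (G.Coloring α)) (c : (G.deleteIncidenceSet x).Coloring α)
    (j : α) : ∃ w, G.Adj x w ∧ c w = j := by
  by_contra! hj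
  refine hG.false (.mk (update c x j) fun {v w} hvw => ?_)
  by_cases hvx : v = x
  · subst hvx
    simpa [hvw.ne'] using (hj w hvw).symm
  by_cases hwx : w = x
  · subst hwx
    simpa [hvw.ne] using hj v hvw.symm
  simpa [hvx, hwx] using color_ne c hvw hvx hwx

variable [Fintype V]

lemma card_le_degree [Fintype α] (hG : IsEmpty (G.Coloring α))
    (c : (G.deleteIncidenceSet x).Coloring α) : Fintype.card α ≤ G.degree x := by
  have himage : (G.neighborFinset x).image c = univ := eq_univ_iff_forall.2 fun j => by
    simpa using exists_adj_color_eq hG c j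
  rw [← card_univ, ← himage, ← card_neighborFinset_eq_degree]
  exact card_image_le

/-- The neighbours of `v` in the part `i`. -/
noncomputable def partNbrs (G : SimpleGraph V) (t : V → ι) (v : V) (i : ι) : Finset V :=
  {w ∈ G.neighborFinset v | t w = i}

lemma mem_partNbrs : w ∈ partNbrs G t v i ↔ G.Adj v w ∧ t w = i := by
  simp [partNbrs]

lemma neighborFinset_partGraph : (partGraph G t).neighborFinset v = partNbrs G t v (t v) := by
  ext w
  simp only [mem_neighborFinset, partGraph_adj, mem_partNbrs, eq_comm]

lemma degree_partGraph : (partGraph G t).degree v = #(partNbrs G t v (t v)) := by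
  rw [← card_neighborFinset_eq_degree, neighborFinset_partGraph]

lemma sum_card_partNbrs [Fintype ι] : ∑ i, #(partNbrs G t v i) = G.degree v :=
  (card_eq_sum_card_fiberwise fun _ _ => mem_univ _).symm

lemma partNbrs_congr (h : ∀ w ≠ v, t' w = t w) : partNbrs G t' v i = partNbrs G t v i := by
  ext w
  simp only [mem_partNbrs]
  refine and_congr_right fun hvw => ?_
  rw [h w hvw.ne']

/-- The number of edges of `G - x` inside the parts of `t`. -/
noncomputable def partEdges (G : SimpleGraph V) (x : V) (t : V → ι) : ℕ :=
  #(partGraph (G.deleteIncidenceSet x) t).edgeFinset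

lemma partEdges_congr (h : ∀ v ≠ x, t' v = t v) : partEdges G x t' = partEdges G x t := by
  have hgraph : partGraph (G.deleteIncidenceSet x) t' = partGraph (G.deleteIncidenceSet x) t := by
    ext v w
    simp only [partGraph_adj]
    refine and_congr_right fun hvw => ?_
    obtain ⟨-, hv, hw⟩ := deleteIncidenceSet_adj.1 hvw
    rw [h v hv, h w hw]
  rw [partEdges, partEdges, hgraph]

lemma partEdges_add_degree (G : SimpleGraph V) (x : V) (t : V → ι) :
    partEdges G x t + (partGraph G t).degree x = #(partGraph G t).edgeFinset := by
  have hgraph : partGraph (G.deleteIncidenceSet x) t = (partGraph G t).deleteIncidenceSet x := by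
    ext v w
    simp only [partGraph_adj, deleteIncidenceSet_adj]
    tauto
  have hle : (partGraph G t).degree x ≤ #(partGraph G t).edgeFinset := by
    rw [← card_incidenceFinset_eq_degree]
    exact card_le_card (incidenceFinset_subset _ _)
  have hcard : partEdges G x t = #(partGraph G t).edgeFinset - (partGraph G t).degree x := by
    rw [← card_edgeFinset_deleteIncidenceSet, partEdges]
    congr!
  omega

/-- A Mozhan partition: `t` comes from a colouring of `G - x`, and no pair `(y, t')` coming from a
colouring of `G - y` has fewer edges inside its parts. -/
structure IsMozhan (G : SimpleGraph V) (κ : α → ι) (x : V) (t : V → ι) : Prop where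
  splits : Splits G κ x t
  partEdges_le : ∀ y t', Splits G κ y t' → partEdges G x t ≤ partEdges G y t'

lemma IsMozhan.congr (h : IsMozhan G κ x t) (ht : ∀ v ≠ x, t' v = t v) : IsMozhan G κ x t' :=
  ⟨h.splits.congr ht, partEdges_congr (G := G) ht ▸ h.partEdges_le⟩

lemma IsMozhan.update_part (h : IsMozhan G κ x t) (i : ι) : IsMozhan G κ x (update t x i) :=
  h.congr fun _ hv => update_of_ne hv ..

lemma exists_isMozhan (h : Splits G κ x t) : ∃ y t', IsMozhan G κ y t' := by
  obtain ⟨⟨y, t'⟩, hy, hmin⟩ := exists_minimalFor_of_wellFoundedLT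
    (fun p : V × (V → ι) => Splits G κ p.1 p.2) (fun p => partEdges G p.1 p.2) ⟨(x, t), h⟩
  exact ⟨y, t', hy, fun z t'' hz =>
    (le_total (partEdges G y t') (partEdges G z t'')).elim id (hmin (j := (z, t'')) hz)⟩

variable [Fintype α]

/-- The set of colours that `κ` reserves for the part `i`. -/
noncomputable def palette (κ : α → ι) (i : ι) : Finset α := {j | κ j = i}

lemma mem_palette {j : α} : j ∈ palette κ i ↔ κ j = i := by simp [palette]

lemma sum_card_palette [Fintype ι] : ∑ i, #(palette κ i) = Fintype.card α :=
  (card_eq_sum_card_fiberwise fun _ _ => mem_univ _).symm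

lemma palette_eq_image (hG : IsEmpty (G.Coloring α)) (c : (G.deleteIncidenceSet x).Coloring α)
    (hc : ∀ v ≠ x, κ (c v) = t v) (i : ι) : palette κ i = (partNbrs G t x i).image c := by
  ext j
  simp only [mem_palette, mem_image, mem_partNbrs]
  constructor
  · rintro rfl
    obtain ⟨w, hw, rfl⟩ := exists_adj_color_eq hG c j
    exact ⟨w, ⟨hw, (hc w hw.ne').symm⟩, rfl⟩
  · rintro ⟨w, ⟨hw, rfl⟩, rfl⟩
    exact hc w hw.ne'

lemma Splits.card_palette_le (hG : IsEmpty (G.Coloring α)) (h : Splits G κ x t) (i : ι) :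
    #(palette κ i) ≤ #(partNbrs G t x i) := by
  obtain ⟨c, hc⟩ := h
  rw [palette_eq_image hG c hc]
  exact card_image_le

lemma Splits.swap (hG : IsEmpty (G.Coloring α)) (h : Splits G κ x t)
    (hx : (partGraph G t).degree x = #(palette κ (t x))) (hxy : (partGraph G t).Adj x y) :
    Splits G κ y t := by
  obtain ⟨c, hc⟩ := h
  have hy := hc y hxy.1.ne'
  have hinj : Set.InjOn c (partNbrs G t x (t x)) :=
    injOn_of_card_image_eq (by rw [← palette_eq_image hG c hc, ← hx, degree_partGraph])
  have honly : ∀ v, G.Adj x v → v ≠ y → c v ≠ c y := fun v hxv hvy hcv =>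
    hvy (hinj (mem_partNbrs.2 ⟨hxv, by rw [← hc v hxv.ne', hcv, hy, hxy.2]⟩)
      (mem_partNbrs.2 ⟨hxy.1, hxy.2.symm⟩) hcv)
  refine ⟨recolor c (c y) honly, fun v _ => ?_⟩
  by_cases hvx : v = x
  · subst hvx
    rw [recolor_apply, update_self, hy, hxy.2]
  · rw [recolor_apply, update_of_ne hvx, hc v hvx]

lemma Splits.card_partNbrs_of_degree_le [Finite ι] (hG : IsEmpty (G.Coloring α))
    (h : Splits G κ x t) (hx : G.degree x ≤ Fintype.card α) (i : ι) :
    #(partNbrs G t x i) = #(palette κ i) := by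
  cases nonempty_fintype ι
  have hle : ∀ i ∈ univ, #(palette κ i) ≤ #(partNbrs G t x i) := fun i _ => h.card_palette_le hG i
  refine ((sum_eq_sum_iff_of_le hle).1 (le_antisymm (sum_le_sum hle) ?_) i (mem_univ i)).symm
  rwa [sum_card_partNbrs, sum_card_palette]

lemma Splits.degree_partGraph_of_degree_le [Finite ι] (hG : IsEmpty (G.Coloring α))
    (h : Splits G κ x t) (hx : G.degree x ≤ Fintype.card α) :
    (partGraph G t).degree x = #(palette κ (t x)) := by
  rw [degree_partGraph, h.card_partNbrs_of_degree_le hG hx]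

lemma Splits.of_reachable [Finite ι] (hG : IsEmpty (G.Coloring α))
    (hdeg : ∀ v, G.degree v ≤ Fintype.card α) (h : Splits G κ x t)
    (hxv : (partGraph G t).Reachable x v) : Splits G κ v t :=
  mem_of_reachable (X := {v | Splits G κ v t}) hxv h fun u hu _ huv =>
    Splits.swap hG hu (hu.degree_partGraph_of_degree_le hG (hdeg u)) huv

lemma IsMozhan.swap (hG : IsEmpty (G.Coloring α)) (h : IsMozhan G κ x t)
    (hx : (partGraph G t).degree x = #(palette κ (t x))) (hxy : (partGraph G t).Adj x y) :
    IsMozhan G κ y t ∧ (partGraph G t).degree y = #(palette κ (t y)) := by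
  have hy := h.splits.swap hG hx hxy
  have hmin := h.partEdges_le y t hy
  have hge : #(palette κ (t y)) ≤ (partGraph G t).degree y :=
    degree_partGraph (G := G) ▸ hy.card_palette_le hG (t y)
  have hEx := partEdges_add_degree G x t
  have hEy := partEdges_add_degree G y t
  rw [hxy.2] at hx
  have heq : partEdges G y t = partEdges G x t := by omega
  exact ⟨⟨hy, heq ▸ h.partEdges_le⟩, by omega⟩

lemma IsMozhan.of_reachable (hG : IsEmpty (G.Coloring α)) (h : IsMozhan G κ x t)
    (hx : (partGraph G t).degree x = #(palette κ (t x)))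
    (hxv : (partGraph G t).Reachable x v) :
    IsMozhan G κ v t ∧ (partGraph G t).degree v = #(palette κ (t v)) :=
  mem_of_reachable
    (X := {v | IsMozhan G κ v t ∧ (partGraph G t).degree v = #(palette κ (t v))})
    hxv ⟨h, hx⟩ fun _ hu _ huv => hu.1.swap hG hu.2 huv

end Partitions

section Brooks

variable {V α : Type*} {G : SimpleGraph V} {i j k : α} {u v v₁ v₂ w x : V}

/-- For a colouring `c` of `G - x`, the partition into the colour classes, with the classes of `i`
and `j` merged and with `x` added to the merged class. The component of `x` in its part is the union
of the Kempe chains in the colours `i` and `j` that start at the neighbours of `x`. -/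
noncomputable def kempePart (c : (G.deleteIncidenceSet x).Coloring α) (i j : α) (v : V) : α :=
  if v = x ∨ c v = j then i else c v

/-- The component of `x` in its part of `kempePart c i j`. -/
def kempeChain (c : (G.deleteIncidenceSet x).Coloring α) (i j : α) : Set V :=
  {v | (partGraph G (kempePart c i j)).Reachable x v}

variable {c : (G.deleteIncidenceSet x).Coloring α}

lemma kempePart_eq_left_iff : kempePart c i j v = i ↔ v = x ∨ c v = i ∨ c v = j := by
  unfold kempePart
  grind

lemma kempePart_eq_left (hv : v ∈ kempeChain c i j) : kempePart c i j v = i :=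
  (part_eq_of_reachable hv).trans (kempePart_eq_left_iff.2 (.inl rfl))

lemma eq_or_color_eq (hv : v ∈ kempeChain c i j) : v = x ∨ c v = i ∨ c v = j :=
  kempePart_eq_left_iff.1 (kempePart_eq_left hv)

lemma mem_kempeChain_of_adj (hv : v ∈ kempeChain c i j) (hvw : G.Adj v w)
    (hw : w = x ∨ c w = i ∨ c w = j) : w ∈ kempeChain c i j :=
  Reachable.trans hv <| Adj.reachable
    ⟨hvw, (kempePart_eq_left hv).trans (kempePart_eq_left_iff.2 hw).symm⟩

lemma splits_kempePart : Splits G (fun l => if l = j then i else l) x (kempePart c i j) :=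
  ⟨c, fun v hv => by simp [kempePart, hv]⟩

/-- The colouring of `G - x` obtained from `c` by exchanging the colours `i` and `k` on the Kempe
chains of these colours at `x`. -/
noncomputable def kempeSwap (c : (G.deleteIncidenceSet x).Coloring α) (i k : α) :
    (G.deleteIncidenceSet x).Coloring α :=
  have hout : ∀ v w, G.Adj v w → v ≠ x → v ∈ kempeChain c i k → w ∉ kempeChain c i k →
      Equiv.swap i k (c v) ≠ c w := by
    intro v w hvw hvx hv hw' heq
    refine hw' (mem_kempeChain_of_adj hv hvw (.inr ?_))
    rcases (eq_or_color_eq hv).resolve_left hvx with h | h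
    · exact .inr (by rw [← heq, h, Equiv.swap_apply_left])
    · exact .inl (by rw [← heq, h, Equiv.swap_apply_right])
  .mk (fun v => if v ∈ kempeChain c i k then Equiv.swap i k (c v) else c v) fun {v w} hvw => by
    obtain ⟨hvw, hv, hw⟩ := deleteIncidenceSet_adj.1 hvw
    have hne := color_ne c hvw hv hw
    split_ifs with hv' hw' hw'
    · exact (Equiv.swap i k).injective.ne hne
    · exact hout v w hvw hv hv' hw'
    · exact (hout w v hvw.symm hw hw' hv').symm
    · exact hne

lemma kempeSwap_of_mem (hv : v ∈ kempeChain c i k) :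
    kempeSwap c i k v = Equiv.swap i k (c v) := if_pos hv

lemma kempeSwap_of_notMem (hv : v ∉ kempeChain c i k) : kempeSwap c i k v = c v := if_neg hv

lemma kempeSwap_of_ne (hi : c v ≠ i) (hk : c v ≠ k) : kempeSwap c i k v = c v := by
  by_cases hv : v ∈ kempeChain c i k
  · rw [kempeSwap_of_mem hv, Equiv.swap_apply_of_ne_of_ne hi hk]
  · exact kempeSwap_of_notMem hv

variable [Fintype V] [Fintype α]

section

variable (hG : IsEmpty (G.Coloring α)) (hdeg : ∀ v, G.degree v ≤ Fintype.card α)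
include hG hdeg

lemma eq_of_color_eq (hv : G.Adj x v) (hw : G.Adj x w) (hvw : c v = c w) : v = w := by
  have hcard := Splits.card_partNbrs_of_degree_le (κ := id) (t := c) hG ⟨c, fun _ _ => rfl⟩
    (hdeg x) (c w)
  have hpal : palette id (c w) = {c w} := by
    ext l
    rw [mem_palette, mem_singleton, id]
  refine card_le_one.1 (hcard.trans_le ?_) v (mem_partNbrs.2 ⟨hv, hvw⟩) w (mem_partNbrs.2 ⟨hw, rfl⟩)
  rw [hpal, card_singleton]

lemma degree_partGraph_kempePart (hij : i ≠ j) (hv : v ∈ kempeChain c i j) :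
    (partGraph G (kempePart c i j)).degree v = 2 := by
  have hsplits := splits_kempePart.of_reachable hG hdeg hv
  have hpal : palette (fun l => if l = j then i else l) i = {i, j} := by
    ext l
    simp only [mem_palette, mem_insert, mem_singleton]
    grind
  rw [hsplits.degree_partGraph_of_degree_le hG (hdeg v), kempePart_eq_left hv, hpal, card_pair hij]

/- At a further common vertex `w` of two chains in the colours `i, j` and `i, k`, which has colour
`i`, the second chain provides two neighbours of colour `k`. As `w` is on the first chain, `G - w`
is colourable without changing the class of `k`, and then `w` has only one such neighbour. -/
lemma adj_of_mem_kempeChain (hik : i ≠ k) (hjk : j ≠ k) (hw : w ≠ x)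
    (hwj : w ∈ kempeChain c i j) (hwk : w ∈ kempeChain c i k) : G.Adj x w ∧ c w = i := by
  have hcw : c w = i := by
    have hj := (eq_or_color_eq hwj).resolve_left hw
    have hk := (eq_or_color_eq hwk).resolve_left hw
    grind
  refine ⟨?_, hcw⟩
  by_contra hxw
  have hcard := (splits_kempePart.of_reachable hG hdeg hwj).card_partNbrs_of_degree_le hG (hdeg w) k
  have hpal : palette (fun l => if l = j then i else l) k = {k} := by
    ext l
    simp only [mem_palette, mem_singleton]
    grind
  have hdegw := degree_partGraph_kempePart hG hdeg hik hwk
  have hsub : partNbrs G (kempePart c i k) w i ⊆ partNbrs G (kempePart c i j) w k := by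
    intro u hu
    obtain ⟨hwu, hu⟩ := mem_partNbrs.1 hu
    have hux : u ≠ x := fun h => hxw (h ▸ hwu.symm)
    have hcu := color_ne c hwu hw hux
    have huk := (kempePart_eq_left_iff.1 hu).resolve_left hux
    refine mem_partNbrs.2 ⟨hwu, ?_⟩
    unfold kempePart
    grind
  have hle := card_le_card hsub
  rw [degree_partGraph, kempePart_eq_left hwk] at hdegw
  rw [hcard, hpal, hdegw, card_singleton] at hle
  omega

lemma exists_adj_mem_kempeChain (hv : G.Adj x v) (hj : c v ≠ j) :
    ∃ u ∈ kempeChain c (c v) j, u ≠ x ∧ G.Adj v u ∧ c u = j := by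
  have hvmem : v ∈ kempeChain c (c v) j := mem_kempeChain_of_adj .rfl hv (.inr (.inl rfl))
  have hdegv := degree_partGraph_kempePart hG hdeg hj hvmem
  obtain ⟨u, hu, hux⟩ := exists_mem_ne (s := (partGraph G (kempePart c (c v) j)).neighborFinset v)
    (by rw [card_neighborFinset_eq_degree, hdegv]; exact one_lt_two) x
  obtain ⟨hvu, hpart⟩ := partGraph_adj.1 ((mem_neighborFinset ..).1 hu)
  have hcu : c u = c v ∨ c u = j := (kempePart_eq_left_iff.1
    (hpart.symm.trans (kempePart_eq_left hvmem))).resolve_left hux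
  exact ⟨u, mem_kempeChain_of_adj hvmem hvu (.inr hcu), hux, hvu,
    hcu.resolve_left (color_ne c hvu hv.ne' hux).symm⟩

lemma mem_kempeChain_kempeSwap (hv : G.Adj x v) (hj : c v ≠ j) (hk : c v ≠ k) (hjk : j ≠ k)
    (hu : u ∈ kempeChain c (c v) j) (huv : u ≠ v) :
    u ∈ kempeChain (kempeSwap c (c v) k) j (c v) := by
  set i := c v
  have hdeg2 : ∀ w ∈ kempeChain c i j, (partGraph G (kempePart c i j)).degree w = 2 :=
    fun w hw => degree_partGraph_kempePart hG hdeg hj hw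
  have hvmem : v ∈ kempeChain c i j := mem_kempeChain_of_adj .rfl hv (.inr (.inl rfl))
  have hreach : ((partGraph G (kempePart c i j)).deleteIncidenceSet v).Reachable x u :=
    reachable_deleteIncidenceSet_of_even_degree
      (fun w hw => hdeg2 w (Reachable.trans hvmem hw) ▸ even_two) (hdeg2 v hvmem)
      (Reachable.symm hvmem) hv.ne ((Reachable.symm hvmem).trans hu) huv
  have hcolor : ∀ w ∈ kempeChain c i j, w ≠ v → kempePart (kempeSwap c i k) j i w = j := by
    intro w hw hwv
    rw [kempePart_eq_left_iff]
    by_cases hwx : w = x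
    · exact .inl hwx
    refine .inr ?_
    rcases (eq_or_color_eq hw).resolve_left hwx with hcw | hcw
    · refine .inr ((kempeSwap_of_notMem fun hwk => hwv ?_).trans hcw)
      obtain ⟨hxw, hcw⟩ := adj_of_mem_kempeChain hG hdeg hk hjk hwx hw hwk
      exact eq_of_color_eq hG hdeg hxw hv hcw
    · exact .inl (by rw [kempeSwap_of_ne] <;> grind)
  refine reachable_of_forall_adj hreach fun p q hp hpq => ?_
  obtain ⟨hpq, hpv, hqv⟩ := deleteIncidenceSet_adj.1 hpq
  have hpmem : p ∈ kempeChain c i j := Reachable.mono (deleteIncidenceSet_le _ _) hp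
  exact ⟨hpq.1, (hcolor p hpmem hpv).trans (hcolor q (hpmem.trans hpq.reachable) hqv).symm⟩

end

/- Brooks' theorem, localized at the only uncoloured vertex. -/
theorem adj_of_adj_of_degree_le (hG : IsEmpty (G.Coloring α))
    (hdeg : ∀ v, G.degree v ≤ Fintype.card α) (hα : 3 ≤ Fintype.card α)
    (c : (G.deleteIncidenceSet x).Coloring α)
    (hv₁ : G.Adj x v₁) (hv₂ : G.Adj x v₂) (hne : v₁ ≠ v₂) : G.Adj v₁ v₂ := by
  by_contra hnadj
  have hij : c v₁ ≠ c v₂ := fun h => hne (eq_of_color_eq hG hdeg hv₁ hv₂ h)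
  obtain ⟨k, hk⟩ := exists_mem_notMem_of_card_lt_card
    (s := {c v₁, c v₂}) (t := (univ : Finset α)) (card_le_two.trans_lt hα)
  simp only [mem_univ, mem_insert, mem_singleton, not_or, true_and, ← ne_eq] at hk
  obtain ⟨hki, hkj⟩ := hk
  obtain ⟨u, hu, hux, hvu, hcu⟩ := exists_adj_mem_kempeChain hG hdeg hv₁ hij
  have hu' := mem_kempeChain_kempeSwap hG hdeg hv₁ hij hki.symm hkj.symm hu hvu.ne'
  set c' := kempeSwap c (c v₁) k
  have hc'v₁ : c' v₁ = k := by
    rw [kempeSwap_of_mem (mem_kempeChain_of_adj .rfl hv₁ (.inr (.inl rfl))),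
      Equiv.swap_apply_left]
  have hc'v₂ : c' v₂ = c v₂ := kempeSwap_of_ne hij.symm hkj.symm
  have hc'u : c' u = c v₂ := (kempeSwap_of_ne (hcu ▸ hij.symm) (hcu ▸ hkj.symm)).trans hcu
  have hv₁mem : v₁ ∈ kempeChain c' (c v₂) k :=
    mem_kempeChain_of_adj .rfl hv₁ (.inr (.inr hc'v₁))
  have humem : u ∈ kempeChain c' (c v₂) k :=
    mem_kempeChain_of_adj hv₁mem hvu (.inr (.inl hc'u))
  have hxu := (adj_of_mem_kempeChain hG hdeg hkj.symm hki.symm hux hu' humem).1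
  exact hnadj (eq_of_color_eq hG hdeg hxu hv₂ (hc'u.trans hc'v₂.symm) ▸ hvu)

variable {ι : Type*} {κ : α → ι} {t : V → ι}

omit [Fintype V] in
lemma Splits.isEmpty_coloring_induce (hG : IsEmpty (G.Coloring α)) (h : Splits G κ x t) :
    IsEmpty (((partGraph G t).induce {v | (partGraph G t).Reachable x v}).Coloring
      (palette κ (t x))) := by
  obtain ⟨c, hc⟩ := h
  refine ⟨fun d => ?_⟩
  have hcd : ∀ v (hv : (partGraph G t).Reachable x v) w, ¬ (partGraph G t).Reachable x w →
      G.Adj v w → (d ⟨v, hv⟩ : α) ≠ c w := by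
    intro v hv w hw hvw heq
    have hwx : w ≠ x := by
      rintro rfl
      exact hw .rfl
    refine hw (hv.trans (Adj.reachable ⟨hvw, ?_⟩))
    rw [← hc w hwx, ← heq, mem_palette.1 (d ⟨v, hv⟩).2, part_eq_of_reachable hv]
  refine hG.false (.mk
    (fun v => if hv : (partGraph G t).Reachable x v then (d ⟨v, hv⟩ : α) else c v) ?_)
  intro v w hvw
  split_ifs with hv hw hw
  · exact fun heq => d.valid (v := ⟨v, hv⟩) (w := ⟨w, hw⟩)
      ⟨hvw, (part_eq_of_reachable hv).trans (part_eq_of_reachable hw).symm⟩ (Subtype.ext heq)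
  · exact hcd v hv w hw hvw
  · exact (hcd w hw v hv hvw.symm).symm
  · refine color_ne c hvw ?_ ?_ <;> rintro rfl
    exacts [hv .rfl, hw .rfl]

theorem IsMozhan.adj_of_adj (hG : IsEmpty (G.Coloring α)) (h : IsMozhan G κ x t)
    (hx : (partGraph G t).degree x = #(palette κ (t x))) (hpal : 3 ≤ #(palette κ (t x)))
    (hv₁ : (partGraph G t).Adj x v₁) (hv₂ : (partGraph G t).Adj x v₂) (hne : v₁ ≠ v₂) :
    G.Adj v₁ v₂ := by
  set X : Set V := {v | (partGraph G t).Reachable x v}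
  set H := (partGraph G t).induce X
  obtain ⟨c, hc⟩ := h.splits
  have hX : ∀ v : X, t v = t x := fun v => part_eq_of_reachable v.2
  have hdeg : ∀ v, H.degree v ≤ Fintype.card (palette κ (t x)) := by
    intro v
    have hHv : H.degree v = (partGraph G t).degree v :=
      degree_induce_of_neighborSet_subset fun w hvw =>
        Reachable.trans v.2 (Adj.reachable ((mem_neighborSet ..).1 hvw))
    rw [hHv, (h.of_reachable hG hx v.2).2, hX, Fintype.card_coe]
  have hcard : 3 ≤ Fintype.card (palette κ (t x)) := by rwa [Fintype.card_coe]
  obtain ⟨j, hj⟩ : (palette κ (t x)).Nonempty := card_pos.1 (by omega)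
  let e : α → palette κ (t x) := fun l => if hl : l ∈ palette κ (t x) then ⟨l, hl⟩ else ⟨j, hj⟩
  let d : (H.deleteIncidenceSet ⟨x, .rfl⟩).Coloring (palette κ (t x)) :=
    .mk (fun v => e (c v)) fun {v w} hvw => by
      obtain ⟨hvw, hv, hw⟩ := deleteIncidenceSet_adj.1 hvw
      have hv' : v.1 ≠ x := fun h => hv (Subtype.ext h)
      have hw' : w.1 ≠ x := fun h => hw (Subtype.ext h)
      have hcv : c v ∈ palette κ (t x) := mem_palette.2 ((hc v hv').trans (hX v))
      have hcw : c w ∈ palette κ (t x) := mem_palette.2 ((hc w hw').trans (hX w))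
      simpa [e, hcv, hcw] using color_ne c hvw.1 hv' hw'
  have hadj : H.Adj ⟨v₁, hv₁.reachable⟩ ⟨v₂, hv₂.reachable⟩ :=
    adj_of_adj_of_degree_le (h.splits.isEmpty_coloring_induce hG) hdeg hcard d hv₁ hv₂
      fun h => hne (congrArg Subtype.val h)
  exact hadj.1

end Brooks

section TwoParts

variable {V α : Type*} [Fintype V] [Fintype α] {G : SimpleGraph V} {κ : α → Bool}
  {t t' : V → Bool} {a b p u v w x y z : V}

/-- A low vertex is one of degree at most the number of colours. -/
def IsLow (G : SimpleGraph V) (α : Type*) [Fintype α] (v : V) : Prop :=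
  G.degree v ≤ Fintype.card α

/-- The graphs of the main argument: not colourable, and with any two vertices of degree greater
than the number of colours nonadjacent. The colours are divided into a pair, for the part `false`,
and at least three colours for the part `true`. -/
structure OreSetting (G : SimpleGraph V) (κ : α → Bool) : Prop where
  isEmpty_coloring : IsEmpty (G.Coloring α)
  card_palette_false : #(palette κ false) = 2
  three_le_card_palette_true : 3 ≤ #(palette κ true)
  isLow_or_isLow : ∀ v w, G.Adj v w → IsLow G α v ∨ IsLow G α w

/-- A Mozhan partition with a low uncoloured vertex, which may be put into either part. -/
structure IsLowMozhan (G : SimpleGraph V) (κ : α → Bool) (x : V) (t : V → Bool) : Prop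
    extends IsMozhan G κ x t where
  isLow : IsLow G α x

namespace IsLowMozhan

lemma update_part (h : IsLowMozhan G κ x t) (i : Bool) : IsLowMozhan G κ x (update t x i) :=
  ⟨h.toIsMozhan.update_part i, h.isLow⟩

variable (hG : OreSetting G κ)
include hG

lemma degree_partGraph_eq (h : IsLowMozhan G κ x t) :
    (partGraph G t).degree x = #(palette κ (t x)) :=
  h.splits.degree_partGraph_of_degree_le hG.isEmpty_coloring h.isLow

lemma of_reachable_of_isLow (h : IsLowMozhan G κ x t) (hv : (partGraph G t).Reachable x v)
    (hlow : IsLow G α v) : IsLowMozhan G κ v t :=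
  ⟨(h.toIsMozhan.of_reachable hG.isEmpty_coloring (h.degree_partGraph_eq hG) hv).1, hlow⟩

lemma degree_eq_two (h : IsLowMozhan G κ x t) (hx : t x = false)
    (hv : (partGraph G t).Reachable x v) : (partGraph G t).degree v = 2 := by
  rw [(h.toIsMozhan.of_reachable hG.isEmpty_coloring (h.degree_partGraph_eq hG) hv).2,
    part_eq_of_reachable hv, hx, hG.card_palette_false]

lemma adj_of_mem_partNbrs (h : IsLowMozhan G κ z t) (ha : a ∈ partNbrs G t z true)
    (hb : b ∈ partNbrs G t z true) (hab : a ≠ b) : G.Adj a b := by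
  rw [mem_partNbrs] at ha hb
  have hz := h.update_part true
  refine hz.toIsMozhan.adj_of_adj hG.isEmpty_coloring (hz.degree_partGraph_eq hG) ?_
    ⟨ha.1, ?_⟩ ⟨hb.1, ?_⟩ hab
  · simpa using hG.three_le_card_palette_true
  · rw [update_self, update_of_ne ha.1.ne', ha.2]
  · rw [update_self, update_of_ne hb.1.ne', hb.2]

lemma isMozhan_update_true (h : IsLowMozhan G κ z t) (ha : a ∈ partNbrs G t z true) :
    IsMozhan G κ a (update t z true) ∧
      (partGraph G (update t z true)).degree a = #(palette κ (update t z true a)) := by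
  rw [mem_partNbrs] at ha
  have hz := h.update_part true
  refine hz.toIsMozhan.swap hG.isEmpty_coloring (hz.degree_partGraph_eq hG) ⟨ha.1, ?_⟩
  rw [update_self, update_of_ne ha.1.ne', ha.2]

lemma exchange (h : IsLowMozhan G κ z t) (hb : b ∈ partNbrs G t z true) (hlow : IsLow G α b) :
    IsLowMozhan G κ b (update (update t z true) b false) :=
  ⟨(h.isMozhan_update_true hG hb).1.update_part false, hlow⟩

lemma mem_partNbrs_of_adj (h : IsLowMozhan G κ z t) (ha : a ∈ partNbrs G t z true)
    (hab : G.Adj a b) (hb : t b = true) (hbz : b ≠ z) : b ∈ partNbrs G t z true := by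
  obtain ⟨haMozhan, hadeg⟩ := h.isMozhan_update_true hG ha
  rw [mem_partNbrs] at ha
  have hta : update t z true a = true := by rw [update_of_ne ha.1.ne', ha.2]
  refine mem_partNbrs.2 ⟨haMozhan.adj_of_adj hG.isEmpty_coloring hadeg ?_ (v₁ := z)
    ⟨ha.1.symm, ?_⟩ ⟨hab, ?_⟩ hbz.symm, hb⟩
  · rw [hta]
    exact hG.three_le_card_palette_true
  · rw [hta, update_self]
  · rw [hta, update_of_ne hbz, hb]

lemma exists_isLow_mem_partNbrs (h : IsLowMozhan G κ z t) :
    ∃ b ∈ partNbrs G t z true, IsLow G α b := by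
  have hcard := h.splits.card_partNbrs_of_degree_le hG.isEmpty_coloring h.isLow true
  have hthree := hG.three_le_card_palette_true
  obtain ⟨a, ha, b, hb, hab⟩ := one_lt_card.1 (by omega : 1 < #(partNbrs G t z true))
  rcases hG.isLow_or_isLow a b (h.adj_of_mem_partNbrs hG ha hb hab) with hlow | hlow
  · exact ⟨a, ha, hlow⟩
  · exact ⟨b, hb, hlow⟩

lemma exists_other_nbr (h : IsLowMozhan G κ z t) (hz : t z = false) (v : V) :
    ∃ q, (partGraph G t).Adj z q ∧ q ≠ v := by
  obtain ⟨q, hq, hqv⟩ := exists_mem_ne (s := (partGraph G t).neighborFinset z)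
    (by rw [card_neighborFinset_eq_degree, h.degree_eq_two hG hz .rfl]; exact one_lt_two) v
  exact ⟨q, (mem_neighborFinset ..).1 hq, hqv⟩

lemma reachable_of_forall_eq_false (h : IsLowMozhan G κ y t) (hy : t y = false)
    (ha : (partGraph G t).Reachable y a) (hay : a ≠ y) (hb : (partGraph G t).Reachable y b)
    (hby : b ≠ y) (ht' : ∀ v, (partGraph G t).Reachable y v → v ≠ y → t' v = false) :
    (partGraph G t').Reachable a b := by
  have hreach : ((partGraph G t).deleteIncidenceSet y).Reachable a b :=
    reachable_deleteIncidenceSet_of_even_degree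
      (fun v hv => h.degree_eq_two hG hy hv ▸ even_two) (h.degree_eq_two hG hy .rfl) ha hay hb hby
  refine reachable_of_forall_adj hreach fun v w hav hvw => ?_
  obtain ⟨hvw, hvy, hwy⟩ := deleteIncidenceSet_adj.1 hvw
  have hv := ha.trans (hav.mono (deleteIncidenceSet_le _ _))
  exact ⟨hvw.1, (ht' v hv hvy).trans (ht' w (hv.trans hvw.reachable) hwy).symm⟩

/- In `t'` the cycle through `y` has become a path avoiding `y`, which is contained in the cycle
through `b`. An end `p` of the path that is not adjacent to `b` would have degree one in `t'`. -/
lemma adj_of_forall_eq_false (h : IsLowMozhan G κ y t) (hy : t y = false)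
    (h' : IsLowMozhan G κ b t') (hb : t' b = false)
    (ht' : ∀ v, (partGraph G t).Reachable y v → v ≠ y → t' v = false)
    (hclosed : ∀ v w, (partGraph G t).Reachable y v → v ≠ y → G.Adj v w → t' w = false → w ≠ b →
      (partGraph G t).Reachable y w ∧ w ≠ y)
    (hv : (partGraph G t).Reachable y v) (hvy : v ≠ y) (hbv : G.Adj b v)
    (hp : (partGraph G t).Adj y p) : G.Adj b p := by
  have hvp : (partGraph G t').Reachable v p :=
    h.reachable_of_forall_eq_false hG hy hv hvy hp.reachable hp.ne' ht'
  have hbv' : (partGraph G t').Adj b v := ⟨hbv, hb.trans (ht' v hv hvy).symm⟩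
  have hbp : (partGraph G t').Reachable b p := hbv'.reachable.trans hvp
  by_contra hnadj
  have hsub : (partGraph G t').neighborFinset p ⊆ ((partGraph G t).neighborFinset p).erase y := by
    intro w hw
    obtain ⟨hpw, htw⟩ := partGraph_adj.1 ((mem_neighborFinset ..).1 hw)
    rw [ht' p hp.reachable hp.ne'] at htw
    obtain ⟨hw, hwy⟩ := hclosed p w hp.reachable hp.ne' hpw htw.symm
      fun hwb => hnadj (hwb ▸ hpw.symm)
    exact mem_erase.2 ⟨hwy, (mem_neighborFinset ..).2
      ⟨hpw, (part_eq_of_reachable hp.reachable).trans (part_eq_of_reachable hw).symm⟩⟩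
  have hcard := card_le_card hsub
  rw [card_erase_of_mem ((mem_neighborFinset ..).2 hp.symm), card_neighborFinset_eq_degree,
    card_neighborFinset_eq_degree, h.degree_eq_two hG hy hp.reachable,
    h'.degree_eq_two hG hb hbp] at hcard
  omega

lemma adj_of_exchange (h : IsLowMozhan G κ z t) (hz : t z = false)
    (hb : b ∈ partNbrs G t z true) (hlow : IsLow G α b)
    (hv : (partGraph G t).Reachable z v) (hvz : v ≠ z) (hbv : G.Adj b v)
    (hp : (partGraph G t).Adj z p) : G.Adj b p := by
  have htb := (mem_partNbrs.1 hb).2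
  have htv : ∀ v, (partGraph G t).Reachable z v → t v = false := fun v hv =>
    (part_eq_of_reachable hv).trans hz
  refine h.adj_of_forall_eq_false hG hz (h.exchange hG hb hlow) (update_self ..) ?_ ?_ hv hvz hbv hp
  · intro v hv hvz
    have hvb : v ≠ b := by
      rintro rfl
      simp [htv v hv] at htb
    rw [update_of_ne hvb, update_of_ne hvz, htv v hv]
  · intro v w hv hvz hvw htw hwb
    rw [update_of_ne hwb] at htw
    have hwz : w ≠ z := by
      rintro rfl
      simp at htw
    rw [update_of_ne hwz] at htw
    exact ⟨hv.trans (Adj.reachable ⟨hvw, (htv v hv).trans htw.symm⟩), hwz⟩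

lemma partNbrs_subset_of_not_disjoint (hz : IsLowMozhan G κ z t) (hy : IsLowMozhan G κ y t)
    (hty : t y = false) (hzy : ¬ Disjoint (partNbrs G t z true) (partNbrs G t y true)) :
    partNbrs G t z true ⊆ partNbrs G t y true := by
  obtain ⟨a, haz, hay⟩ := not_disjoint_iff.1 hzy
  intro b hb
  by_cases hab : a = b
  · exact hab ▸ hay
  · have htb := (mem_partNbrs.1 hb).2
    refine hy.mem_partNbrs_of_adj hG hay (hz.adj_of_mem_partNbrs hG haz hb hab) htb ?_
    rintro rfl
    simp [hty] at htb

lemma card_le_two_of_forall_adj (h : IsLowMozhan G κ z t) (hb : b ∈ partNbrs G t z true)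
    (hlow : IsLow G α b) {s : Finset V} (hs : ∀ v ∈ s, G.Adj b v ∧ v ≠ z ∧ t v = false) :
    #s ≤ 2 := by
  have hcard := (h.isMozhan_update_true hG hb).1.splits.card_partNbrs_of_degree_le
    hG.isEmpty_coloring hlow false
  rw [← hG.card_palette_false, ← hcard]
  refine card_le_card fun v hv => ?_
  obtain ⟨hbv, hvz, htv⟩ := hs v hv
  exact mem_partNbrs.2 ⟨hbv, by rw [update_of_ne hvz, htv]⟩

lemma exists_common_nbr (hz : IsLowMozhan G κ z t) (hy : IsLowMozhan G κ y t)
    (htz : t z = false) (hzy : (partGraph G t).Adj z y)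
    (hdisj : ¬ Disjoint (partNbrs G t z true) (partNbrs G t y true)) :
    ∃ q, (partGraph G t).Adj z q ∧ (partGraph G t).Adj y q ∧
      ∀ b ∈ partNbrs G t z true, IsLow G α b → G.Adj q b := by
  have hty : t y = false := hzy.2.symm.trans htz
  obtain ⟨q, hzq, hqy⟩ := hz.exists_other_nbr hG htz y
  obtain ⟨r, hyr, hrz⟩ := hy.exists_other_nbr hG hty z
  have hsub := hz.partNbrs_subset_of_not_disjoint hG hy hty hdisj
  have hadj : ∀ b ∈ partNbrs G t z true, IsLow G α b → G.Adj b q ∧ G.Adj b r := fun b hb hlow =>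
    ⟨hz.adj_of_exchange hG htz hb hlow hzy.reachable hzy.ne'
      (mem_partNbrs.1 (hsub hb)).1.symm hzq,
    hy.adj_of_exchange hG hty (hsub hb) hlow hzy.symm.reachable hzy.ne
      (mem_partNbrs.1 hb).1.symm hyr⟩
  suffices hqr : q = r by
    subst hqr
    exact ⟨q, hzq, hyr, fun b hb hlow => (hadj b hb hlow).1.symm⟩
  obtain ⟨b, hb, hlow⟩ := hz.exists_isLow_mem_partNbrs hG
  by_contra hqr
  have hle := hz.card_le_two_of_forall_adj hG hb hlow (s := {y, q, r}) <| by
    simp only [mem_insert, mem_singleton, forall_eq_or_imp, forall_eq]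
    exact ⟨⟨(mem_partNbrs.1 (hsub hb)).1.symm, hzy.ne', hty⟩,
      ⟨(hadj b hb hlow).1, hzq.ne', hzq.2.symm.trans htz⟩,
      ⟨(hadj b hb hlow).2, hrz, hyr.2.symm.trans hty⟩⟩
  rw [card_eq_three.2 ⟨y, q, r, hqy.symm, hyr.ne, hqr, rfl⟩] at hle
  omega

end IsLowMozhan

lemma IsMozhan.exists_adj_isLow (hG : OreSetting G κ) (h : IsMozhan G κ x t) (hx : t x = false) :
    ∃ z y, (partGraph G t).Reachable x z ∧ (partGraph G t).Adj z y ∧ IsLow G α z ∧ IsLow G α y := by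
  have hcard : #(palette κ (t x)) = 2 := hx ▸ hG.card_palette_false
  obtain ⟨i, hi, j, hj, hij⟩ := one_lt_card.1 (by omega : 1 < #(palette κ (t x)))
  by_contra! hcon
  refine (h.splits.isEmpty_coloring_induce hG.isEmpty_coloring).false
    (.mk (fun v => if IsLow G α v then ⟨i, hi⟩ else ⟨j, hj⟩) fun {v w} hvw => ?_)
  have hcon' := hcon v w v.2 hvw
  have hlow := hG.isLow_or_isLow v w hvw.1
  split_ifs with hv hw hw
  · exact absurd hw (hcon' hv)
  · exact fun h => hij (congrArg Subtype.val h)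
  · exact fun h => hij (congrArg Subtype.val h).symm
  · exact absurd hlow (not_or.2 ⟨hv, hw⟩)

/-- Whenever a low Mozhan partition agrees with `t` on `W`, where `W` is a union of components of
its parts, and leaves uncoloured a vertex outside of `W`, this vertex has no neighbour in `W`. The
predicate `P` restricts the uncoloured vertices and the partitions that are considered. -/
def Sealed (G : SimpleGraph V) (κ : α → Bool) (t : V → Bool) (W : Set V)
    (P : V → (V → Bool) → Prop) : Prop :=
  ∀ u t', IsLowMozhan G κ u t' → u ∉ W → P u t' → (∀ v ∈ W, t' v = t v) →
    PartClosed (G.deleteIncidenceSet u) t' W → ∀ v ∈ W, ¬ G.Adj u v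

/-- A set `W` of vertices that the uncoloured vertex `y`, put into the part `true`, has left behind
for good: no uncoloured vertex can come back to `W` as long as `y` stays in the part `true`. -/
structure IsTrap (G : SimpleGraph V) (κ : α → Bool) (y : V) (t : V → Bool) (W : Set V) : Prop
    extends IsLowMozhan G κ y t where
  part_eq : t y = true
  notMem : y ∉ W
  closed : PartClosed G t W
  mem_of_adj : ∀ w, G.Adj y w → t w = false → w ∈ W
  sealed : Sealed G κ t W fun u t' => u ≠ y ∧ t' y = true

/-- The set `W` together with the component of `z` in the part `false`, except for `y`, and the
neighbours of `z` in the part `true`. -/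
def enlarge (G : SimpleGraph V) (t : V → Bool) (z y : V) (W : Set V) : Set V :=
  {v | v ∈ W ∨ ((partGraph G t).Reachable z v ∧ v ≠ y) ∨ v ∈ partNbrs G t z true}

section Enlarge

variable {W : Set V} (hG : OreSetting G κ) (hz : IsLowMozhan G κ z t) (hy : IsLowMozhan G κ y t)
  (htz : t z = false) (hzy : (partGraph G t).Adj z y)

include htz hzy in
lemma notMem_enlarge (hyW : y ∉ W) : y ∉ enlarge G t z y W := by
  rintro (hy | hy | hy)
  · exact hyW hy
  · exact hy.2 rfl
  · rw [mem_partNbrs, ← hzy.2, htz] at hy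
    simp at hy

include hG hz htz hzy in
lemma partClosed_enlarge (hyW : y ∉ W) (hW : PartClosed G t W) (hyn : ∀ v ∈ W, ¬ G.Adj y v)
    (hdisj : Disjoint (partNbrs G t z true) (partNbrs G t y true)) :
    PartClosed G (update t y true) (enlarge G t z y W) := by
  intro v hv w hvw
  obtain ⟨hvw, htvw⟩ := hvw
  have hvy : v ≠ y := ne_of_mem_of_not_mem hv (notMem_enlarge htz hzy hyW)
  rw [update_of_ne hvy] at htvw
  by_cases hwy : w = y
  · subst hwy
    rw [update_self] at htvw
    rcases hv with hv | hv | hv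
    · exact absurd hvw.symm (hyn v hv)
    · simp [part_eq_of_reachable hv.1, htz] at htvw
    · exact absurd (mem_partNbrs.2 ⟨hvw.symm, htvw⟩) (disjoint_left.1 hdisj hv)
  · rw [update_of_ne hwy] at htvw
    rcases hv with hv | hv | hv
    · exact .inl (hW v hv w ⟨hvw, htvw⟩)
    · exact .inr (.inl ⟨hv.1.trans (Adj.reachable ⟨hvw, htvw⟩), hwy⟩)
    · have htw : t w = true := htvw.symm.trans (mem_partNbrs.1 hv).2
      exact .inr (.inr (hz.mem_partNbrs_of_adj hG hv hvw htw (by rintro rfl; simp [htz] at htw)))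

variable (hu : IsLowMozhan G κ u t') (huW : u ∉ enlarge G t z y W) (huy : u ≠ y)
  (hty : t' y = true) (ht' : ∀ v ∈ enlarge G t z y W, t' v = t v)

include htz hzy ht' in
lemma mem_enlarge_of_reachable (hv : (partGraph G t).Reachable y v) (hvy : v ≠ y) :
    v ∈ enlarge G t z y W ∧ t' v = false := by
  have hzv := hzy.reachable.trans hv
  have hvW : v ∈ enlarge G t z y W := .inr (.inl ⟨hzv, hvy⟩)
  exact ⟨hvW, by rw [ht' v hvW, part_eq_of_reachable hzv, htz]⟩

include hG hz hu huW ht' in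
lemma exists_isLow_mem_partNbrs_of_adj (hv : v ∈ partNbrs G t z true) (huv : G.Adj u v) :
    ∃ b ∈ partNbrs G t z true, IsLow G α b ∧ b ∈ partNbrs G t' u true := by
  obtain ⟨b, hb, hlow⟩ := hz.exists_isLow_mem_partNbrs hG
  have ht'N : ∀ v ∈ partNbrs G t z true, t' v = true := fun v hv =>
    (ht' v (.inr (.inr hv))).trans (mem_partNbrs.1 hv).2
  refine ⟨b, hb, hlow, ?_⟩
  by_cases hvb : v = b
  · exact mem_partNbrs.2 ⟨hvb ▸ huv, ht'N b hb⟩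
  · exact hu.mem_partNbrs_of_adj hG (mem_partNbrs.2 ⟨huv, ht'N v hv⟩)
      (hz.adj_of_mem_partNbrs hG hv hb hvb) (ht'N b hb) fun h => huW (.inr (.inr (h ▸ hb)))

include hG hz hy htz hzy hu huW huy hty ht'

/- Moving `u` into the part `false` would close a cycle through `z`, which has lost its neighbour
`y`. -/
lemma not_adj_of_reachable (hv : (partGraph G t).Reachable z v) (hvy : v ≠ y) : ¬ G.Adj u v := by
  intro huv
  have htv : ∀ v, (partGraph G t).Reachable y v → v ≠ y → update t' u false v = false := by
    intro v hv hvy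
    obtain ⟨hvW, htv⟩ := mem_enlarge_of_reachable htz hzy ht' hv hvy
    rw [update_of_ne (ne_of_mem_of_not_mem hvW huW), htv]
  have hyv := hzy.reachable.symm.trans hv
  have hvz := hy.reachable_of_forall_eq_false hG (hzy.2 ▸ htz) hyv hvy hzy.reachable.symm hzy.ne htv
  have huv' : (partGraph G (update t' u false)).Adj u v :=
    ⟨huv, by rw [update_self, htv v hyv hvy]⟩
  have hdeg := (hu.update_part false).degree_eq_two hG (update_self ..) (huv'.reachable.trans hvz)
  have hsub : (partGraph G (update t' u false)).neighborFinset z ⊆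
      ((partGraph G t).neighborFinset z).erase y := by
    intro w hw
    obtain ⟨hzw, htw⟩ := partGraph_adj.1 ((mem_neighborFinset ..).1 hw)
    rw [htv z hzy.reachable.symm hzy.ne] at htw
    have hwy : w ≠ y := by
      rintro rfl
      simp [update_of_ne huy.symm, hty] at htw
    have hwW : w ∈ enlarge G t z y W := by
      cases h : t w
      · exact .inr (.inl ⟨Adj.reachable ⟨hzw, htz.trans h.symm⟩, hwy⟩)
      · exact .inr (.inr (mem_partNbrs.2 ⟨hzw, h⟩))
    rw [update_of_ne (ne_of_mem_of_not_mem hwW huW), ht' w hwW] at htw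
    exact mem_erase.2 ⟨hwy, (mem_neighborFinset ..).2 ⟨hzw, htz.trans htw⟩⟩
  have hcard := card_le_card hsub
  rw [card_erase_of_mem ((mem_neighborFinset ..).2 hzy), card_neighborFinset_eq_degree,
    card_neighborFinset_eq_degree, hdeg, hz.degree_eq_two hG htz .rfl] at hcard
  omega

/- Otherwise `u` can be exchanged with a low neighbour `b` of `z` in the part `true`. Then `b` is
adjacent to the other neighbour `p` of `y` in the part `false`, and thus to `y`. -/
lemma not_adj_of_mem_partNbrs (hdisj : Disjoint (partNbrs G t z true) (partNbrs G t y true))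
    (hclosed : PartClosed (G.deleteIncidenceSet u) t' (enlarge G t z y W))
    (hv : v ∈ partNbrs G t z true) : ¬ G.Adj u v := by
  intro huv
  obtain ⟨b, hb, hlow, hub⟩ := exists_isLow_mem_partNbrs_of_adj hG hz hu huW ht' hv huv
  obtain ⟨hzb, htb⟩ := mem_partNbrs.1 hb
  have hty' : t y = false := hzy.2 ▸ htz
  have hreach := fun v => mem_enlarge_of_reachable (v := v) htz hzy ht'
  obtain ⟨p, hyp, hpz⟩ := hy.exists_other_nbr hG hty' z
  have hbp : G.Adj b p := by
    refine hy.adj_of_forall_eq_false hG hty' (hu.exchange hG hub hlow) (update_self ..) ?_ ?_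
      hzy.symm.reachable hzy.ne hzb.symm hyp
    · intro v hv hvy
      obtain ⟨hvW, htv⟩ := hreach v hv hvy
      have hvb : v ≠ b := by
        rintro rfl
        simp [mem_partNbrs, htv] at hub
      rw [update_of_ne hvb, update_of_ne (ne_of_mem_of_not_mem hvW huW), htv]
    · intro v w hv hvy hvw htw hwb
      obtain ⟨hvW, htv⟩ := hreach v hv hvy
      have hwu : w ≠ u := by
        rintro rfl
        simp [update_of_ne hwb] at htw
      rw [update_of_ne hwb, update_of_ne hwu] at htw
      have hwW := hclosed v hvW w
        ⟨deleteIncidenceSet_adj.2 ⟨hvw, ne_of_mem_of_not_mem hvW huW, hwu⟩, htv.trans htw.symm⟩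
      have hvw' : (partGraph G t).Adj v w :=
        ⟨hvw, by rw [← ht' v hvW, ← ht' w hwW, htv, htw]⟩
      exact ⟨hv.trans hvw'.reachable, by rintro rfl; simp [hty] at htw⟩
  have hby := hz.adj_of_exchange hG htz hb hlow (hzy.reachable.trans hyp.reachable) hpz hbp hzy
  exact disjoint_left.1 hdisj hb (mem_partNbrs.2 ⟨hby.symm, htb⟩)

end Enlarge

theorem isTrap_enlarge {W : Set V} (hG : OreSetting G κ) (hz : IsLowMozhan G κ z t)
    (hy : IsLowMozhan G κ y t) (htz : t z = false) (hzy : (partGraph G t).Adj z y)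
    (hdisj : Disjoint (partNbrs G t z true) (partNbrs G t y true)) (hyW : y ∉ W)
    (hW : PartClosed G t W) (hyn : ∀ v ∈ W, ¬ G.Adj y v)
    (hseal : Sealed G κ t W fun u _ => ¬ (partGraph G t).Reachable z u) :
    IsTrap G κ y (update t y true) (enlarge G t z y W) := by
  refine ⟨hy.update_part true, update_self .., notMem_enlarge htz hzy hyW,
    partClosed_enlarge hG hz htz hzy hyW hW hyn hdisj, ?_, ?_⟩
  · intro w hyw htw
    rw [update_of_ne hyw.ne'] at htw
    have hyw' : (partGraph G t).Adj y w := ⟨hyw, by rw [← hzy.2, htz, htw]⟩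
    exact .inr (.inl ⟨hzy.reachable.trans hyw'.reachable, hyw.ne'⟩)
  · rintro u t' hu huW ⟨huy, hty⟩ ht' hclosed v hv
    have ht : ∀ v ∈ enlarge G t z y W, t' v = t v := fun v hv => by
      rw [ht' v hv, update_of_ne (ne_of_mem_of_not_mem hv (notMem_enlarge htz hzy hyW))]
    rcases hv with hv | hv | hv
    · exact hseal u t' hu (fun h => huW (.inl h)) (fun h => huW (.inr (.inl ⟨h, huy⟩)))
        (fun v hv => ht v (.inl hv)) (hW.of_subset (fun _ => .inl) hclosed ht) v hv
    · exact not_adj_of_reachable hG hz hy htz hzy hu huW huy hty ht hv.1 hv.2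
    · exact not_adj_of_mem_partNbrs hG hz hy htz hzy hu huW huy hty ht hdisj hclosed hv

/-- The uncoloured vertex `y` together with its neighbours in the part `true`. These vertices form
a clique. -/
def cliqueAt (G : SimpleGraph V) (t : V → Bool) (y : V) : Set V :=
  {v | v = y ∨ v ∈ partNbrs G t y true}

lemma IsLowMozhan.adj_of_mem_cliqueAt (hG : OreSetting G κ) (hu : IsLowMozhan G κ u t')
    (ht' : ∀ v ∈ cliqueAt G t y, t' v = t v) (hty : t y = true) (huy : u ≠ y)
    (hv : v ∈ cliqueAt G t y) (huv : G.Adj u v) : G.Adj u y := by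
  have hty' : t' y = true := (ht' y (.inl rfl)).trans hty
  rcases id hv with rfl | hvN
  · exact huv
  · obtain ⟨hyv, htv⟩ := mem_partNbrs.1 hvN
    have hvu : v ∈ partNbrs G t' u true := mem_partNbrs.2 ⟨huv, (ht' v hv).trans htv⟩
    exact (mem_partNbrs.1 (hu.mem_partNbrs_of_adj hG hvu hyv.symm hty' huy.symm)).1

namespace IsTrap

variable {W : Set V} (hG : OreSetting G κ) (hI : IsTrap G κ y (update t x true) W)
  (hyx : G.Adj y x) (htx : t x = false) (hlow : IsLow G α x)

include hI hyx in
lemma part_eq_true : t y = true := by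
  simpa [update_of_ne hyx.ne] using hI.part_eq

include hI hyx in
lemma notMem_of_adj : x ∉ W := fun hxW =>
  hI.notMem (hI.closed x hxW y ⟨hyx.symm, by rw [hI.part_eq, update_self]⟩)

include hG hI hyx htx in
lemma partClosed_cliqueAt : PartClosed G t (cliqueAt G t y) := by
  have hty := hI.part_eq_true hyx
  rintro v (rfl | hv) w ⟨hvw, htvw⟩
  · exact .inr (mem_partNbrs.2 ⟨hvw, htvw.symm.trans hty⟩)
  by_cases hwy : w = y
  · exact .inl hwy
  obtain ⟨hyv, htv⟩ := mem_partNbrs.1 hv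
  have hup : ∀ v, t v = true → update t x true v = true := fun v htv => by
    rwa [update_of_ne]
    rintro rfl
    simp [htx] at htv
  have htw := htvw.symm.trans htv
  have hw := hI.mem_partNbrs_of_adj hG (mem_partNbrs.2 ⟨hyv, hup v htv⟩) hvw (hup w htw) hwy
  exact .inr (mem_partNbrs.2 ⟨(mem_partNbrs.1 hw).1, htw⟩)

include hG hI hyx htx hlow

lemma isLowMozhan_of_adj : IsLowMozhan G κ x t := by
  have hx := (hI.isMozhan_update_true hG (mem_partNbrs.2 ⟨hyx, update_self ..⟩)).1.update_part false
  have ht : update (update (update t x true) y true) x false = t := by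
    rw [(update_eq_self_iff (f := update t x true)).2 hI.part_eq.symm, update_idem,
      update_eq_self_iff.2 htx.symm]
  exact ⟨ht ▸ hx, hlow⟩

lemma not_adj_of_mem (hv : v ∈ W) : ¬ G.Adj x v := by
  refine hI.sealed x _ ((hI.isLowMozhan_of_adj hG hyx htx hlow).update_part true)
    (hI.notMem_of_adj hyx) ⟨hyx.ne', hI.part_eq⟩ (fun _ _ => rfl) ?_ v hv
  exact hI.closed.of_subset subset_rfl (fun v hv w hvw => hI.closed v hv w
    ⟨(deleteIncidenceSet_adj.1 hvw.1).1, hvw.2⟩) fun _ _ => rfl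

lemma partClosed_of_adj : PartClosed G t W := by
  intro v hv w hvw
  have hxv : v ≠ x := ne_of_mem_of_not_mem hv (hI.notMem_of_adj hyx)
  have hxw : w ≠ x := by
    rintro rfl
    exact hI.not_adj_of_mem hG hyx htx hlow hv hvw.1.symm
  exact hI.closed v hv w ⟨hvw.1, by rw [update_of_ne hxv, update_of_ne hxw, hvw.2]⟩

lemma notMem_of_reachable (hv : (partGraph G t).Reachable x v) : v ∉ W :=
  mem_of_reachable (X := Wᶜ) hv (hI.notMem_of_adj hyx) fun u hu w huw hw =>
    hu (hI.partClosed_of_adj hG hyx htx hlow w hw u huw.symm)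

lemma not_adj_of_reachable (hv : (partGraph G t).Reachable x v) (hvx : v ≠ x) : ¬ G.Adj v y := by
  intro hvy
  refine hI.notMem_of_reachable hG hyx htx hlow hv (hI.mem_of_adj v hvy.symm ?_)
  rw [update_of_ne hvx, part_eq_of_reachable hv, htx]

lemma disjoint_of_adj (hxv : (partGraph G t).Adj x v) (hv : IsLow G α v) :
    Disjoint (partNbrs G t x true) (partNbrs G t v true) := by
  have hx := hI.isLowMozhan_of_adj hG hyx htx hlow
  have hty := hI.part_eq_true hyx
  have hnadj := hI.not_adj_of_reachable hG hyx htx hlow hxv.reachable hxv.ne'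
  refine disjoint_left.2 fun b hbx hbv => hnadj ?_
  by_cases hby : b = y
  · exact hby ▸ (mem_partNbrs.1 hbv).1
  · have hadj := hx.adj_of_mem_partNbrs hG hbx (mem_partNbrs.2 ⟨hyx.symm, hty⟩) hby
    refine (mem_partNbrs.1 ((hx.of_reachable_of_isLow hG hxv.reachable hv).mem_partNbrs_of_adj hG
      hbv hadj hty ?_)).1
    rintro rfl
    simpa [hty, htx] using hxv.2

/- If no low neighbour of `x` will do, then take any low edge of the component of `x`. Were it not
good, the component would be a triangle, and `x` would have a low neighbour. -/
lemma exists_disjoint_partNbrs : ∃ z v, (partGraph G t).Reachable x z ∧ (partGraph G t).Adj z v ∧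
    IsLow G α z ∧ IsLow G α v ∧ v ≠ x ∧ Disjoint (partNbrs G t z true) (partNbrs G t v true) := by
  have hx := hI.isLowMozhan_of_adj hG hyx htx hlow
  by_cases hnbr : ∃ v, (partGraph G t).Adj x v ∧ IsLow G α v
  · obtain ⟨v, hxv, hv⟩ := hnbr
    exact ⟨x, v, .rfl, hxv, hlow, hv, hxv.ne', hI.disjoint_of_adj hG hyx htx hlow hxv hv⟩
  push Not at hnbr
  obtain ⟨z, v, hxz, hzv, hz, hv⟩ := hx.exists_adj_isLow hG htx
  have hvx : v ≠ x := by
    rintro rfl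
    exact hnbr z hzv.symm hz
  refine ⟨z, v, hxz, hzv, hz, hv, hvx, ?_⟩
  by_contra hdisj
  have hxv := hxz.trans hzv.reachable
  obtain ⟨q, hzq, hvq, -⟩ := (hx.of_reachable_of_isLow hG hxz hz).exists_common_nbr hG
    (hx.of_reachable_of_isLow hG hxv hv) ((part_eq_of_reachable hxz).trans htx) hzv hdisj
  rcases eq_or_eq_or_eq_of_reachable (hx.degree_eq_two hG htx hxz) (hx.degree_eq_two hG htx hxv)
    (hx.degree_eq_two hG htx (hxz.trans hzq.reachable)) hzv hzq hvq hxz.symm with rfl | rfl | rfl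
  · exact hnbr v hzv hv
  · exact hvx rfl
  · exact hnbr z hzq.symm hz

lemma not_adj_of_mem_union (hv : (partGraph G t).Reachable x v) (hlowv : IsLow G α v) (hvx : v ≠ x)
    (hw : w ∈ W ∪ cliqueAt G t y) : ¬ G.Adj v w := by
  have hlowMozhan := (hI.isLowMozhan_of_adj hG hyx htx hlow).of_reachable_of_isLow hG hv hlowv
  have hty := hI.part_eq_true hyx
  have hvW := hI.notMem_of_reachable hG hyx htx hlow hv
  have hvy : v ≠ y := by
    rintro rfl
    simpa [hty, htx] using part_eq_of_reachable hv
  rcases hw with hw | hw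
  · refine hI.sealed v t hlowMozhan hvW ⟨hvy, hty⟩ (fun w hw => ?_) ?_ w hw
    · rw [update_of_ne (ne_of_mem_of_not_mem hw (hI.notMem_of_adj hyx))]
    · exact fun w hw u hwu => hI.partClosed_of_adj hG hyx htx hlow w hw u
        ⟨(deleteIncidenceSet_adj.1 hwu.1).1, hwu.2⟩
  · exact fun hvw => hI.not_adj_of_reachable hG hyx htx hlow hv hvx
      (hlowMozhan.adj_of_mem_cliqueAt hG (fun _ _ => rfl) hty hvy hw hvw)

lemma sealed_union (hxz : (partGraph G t).Reachable x z) :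
    Sealed G κ t (W ∪ cliqueAt G t y) fun u _ => ¬ (partGraph G t).Reachable z u := by
  intro u t' hu huW hzu ht' hclosed v hv huv
  have hty := hI.part_eq_true hyx
  have huy : u ≠ y := fun h => huW (.inr (.inl h))
  have hty' : t' y = true := (ht' y (.inr (.inl rfl))).trans hty
  have hxW : ∀ v ∈ W, v ≠ x := fun v hv => ne_of_mem_of_not_mem hv (hI.notMem_of_adj hyx)
  rcases hv with hv | hv
  · refine hI.sealed u t' hu (fun h => huW (.inl h)) ⟨huy, hty'⟩ (fun v hv => ?_) ?_ v hv huv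
    · rw [ht' v (.inl hv), update_of_ne (hxW v hv)]
    · exact (hI.partClosed_of_adj hG hyx htx hlow).of_subset Set.subset_union_left hclosed ht'
  · have huy' := hu.adj_of_mem_cliqueAt hG (fun v hv => ht' v (.inr hv)) hty huy hv huv
    have hux : u ≠ x := by
      rintro rfl
      exact hzu hxz.symm
    cases htu : t u
    · exact huW (.inl (hI.mem_of_adj u huy'.symm (by rw [update_of_ne hux, htu])))
    · exact huW (.inr (.inr (mem_partNbrs.2 ⟨huy'.symm, htu⟩)))

theorem exists_ssuperset_of_adj : ∃ y' t' W', IsTrap G κ y' t' W' ∧ W ⊂ W' := by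
  obtain ⟨z, v, hxz, hzv, hlowz, hlowv, hvx, hdisj⟩ :=
    hI.exists_disjoint_partNbrs hG hyx htx hlow
  have hx := hI.isLowMozhan_of_adj hG hyx htx hlow
  have hty := hI.part_eq_true hyx
  have hxv := hxz.trans hzv.reachable
  have hclosed := hI.partClosed_of_adj hG hyx htx hlow
  have hvmem : v ∉ W ∪ cliqueAt G t y := by
    have htv := (part_eq_of_reachable hxv).trans htx
    rintro (hv | rfl | hv)
    · exact hI.notMem_of_reachable hG hyx htx hlow hxv hv
    · simp [hty] at htv
    · simp [mem_partNbrs, htv] at hv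
  refine ⟨v, _, _, isTrap_enlarge hG (hx.of_reachable_of_isLow hG hxz hlowz)
    (hx.of_reachable_of_isLow hG hxv hlowv) ((part_eq_of_reachable hxz).trans htx) hzv hdisj hvmem
    ?_ (fun w hw => hI.not_adj_of_mem_union hG hyx htx hlow hxv hlowv hvx hw)
    (hI.sealed_union hG hyx htx hlow hxz), ?_⟩
  · rintro u (hu | hu) w huw
    · exact .inl (hclosed u hu w huw)
    · exact .inr (hI.partClosed_cliqueAt hG hyx htx u hu w huw)
  · exact (Set.ssubset_iff_of_subset fun w hw => .inl (.inl hw)).2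
      ⟨z, .inr (.inl ⟨.rfl, hzv.ne⟩), hI.notMem_of_reachable hG hyx htx hlow hxz⟩

end IsTrap

theorem not_isTrap (hG : OreSetting G κ) (W : Set V) : ¬ IsTrap G κ y t W := by
  induction W using WellFoundedGT.induction generalizing y t with
  | ind W ih =>
    intro hI
    obtain ⟨x, hx, hlow⟩ := hI.exists_isLow_mem_partNbrs hG
    obtain ⟨hyx, htx⟩ := mem_partNbrs.1 hx
    have ht : update (update t x false) x true = t := by
      rw [update_idem, update_eq_self_iff.2 htx.symm]
    obtain ⟨y', t', W', hI', hWW'⟩ :=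
      IsTrap.exists_ssuperset_of_adj hG (ht.symm ▸ hI) hyx (update_self ..) hlow
    exact ih W' hWW' hI'

theorem IsLowMozhan.not_disjoint_partNbrs (hG : OreSetting G κ) (hz : IsLowMozhan G κ z t)
    (hy : IsLowMozhan G κ y t) (htz : t z = false) (hzy : (partGraph G t).Adj z y) :
    ¬ Disjoint (partNbrs G t z true) (partNbrs G t y true) := fun hdisj =>
  not_isTrap hG _ (isTrap_enlarge (W := ∅) hG hz hy htz hzy hdisj (by simp) (by simp [PartClosed])
    (by simp) (by simp [Sealed]))

end TwoParts

section Clique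

variable {V α : Type*} {G : SimpleGraph V} {v w x : V}

/- The vertices of `S` get distinct colours other than `j`, those of `I` get `j`. -/
lemma nonempty_coloring_of_independent [Fintype α] (c : (G.deleteIncidenceSet x).Coloring α)
    {S I : Finset V} (hxS : x ∈ S) (hI : ∀ v ∈ I, ∀ w ∈ I, ¬ G.Adj v w)
    (hS : ∀ v ∈ S, ∀ w, G.Adj v w → w ∈ S ∪ I) (hcard : #S < Fintype.card α) (j : α)
    (hj : ∀ v ∈ I, ∀ w, G.Adj v w → w ∉ S → c w ≠ j) : Nonempty (G.Coloring α) := by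
  obtain ⟨f⟩ : Nonempty (S ↪ {i : α // i ≠ j}) := by
    refine Embedding.nonempty_of_card_le ?_
    rw [Fintype.card_coe, Fintype.card_subtype_compl, Fintype.card_subtype_eq]
    exact Nat.le_sub_one_of_lt hcard
  let c' : V → α := fun v => if v ∈ I then j else if hv : v ∈ S then (f ⟨v, hv⟩).1 else c v
  have hc'I : ∀ v w, v ∈ I → G.Adj v w → c' v ≠ c' w := by
    intro v w hv hvw
    have hw : w ∉ I := fun hw => hI v hv w hw hvw
    simp only [c', if_pos hv, if_neg hw]
    split_ifs with hwS
    · exact (f ⟨w, hwS⟩).2.symm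
    · exact (hj v hv w hvw hwS).symm
  refine ⟨.mk c' fun {v w} hvw => ?_⟩
  by_cases hv : v ∈ I
  · exact hc'I v w hv hvw
  by_cases hw : w ∈ I
  · exact (hc'I w v hw hvw.symm).symm
  simp only [c', if_neg hv, if_neg hw]
  split_ifs with hvS hwS hwS
  · exact fun h => hvw.ne (congrArg Subtype.val (f.injective (Subtype.ext h)))
  · exact absurd ((mem_union.1 (hS v hvS w hvw)).resolve_right hw) hwS
  · exact absurd ((mem_union.1 (hS w hwS v hvw.symm)).resolve_right hv) hvS
  · exact color_ne c hvw (fun h => hvS (h ▸ hxS)) fun h => hwS (h ▸ hxS)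

variable [Fintype V] [Fintype α] {S N : Finset V} {h q : V}

lemma mem_of_adj_of_isLow (hS : G.IsClique S) (hcard : #S + 1 = Fintype.card α) (hqS : q ∉ S)
    (hhS : h ∉ S) (hhq : h ≠ q) (hh : ∀ v ∈ S, G.Adj h v) (hq : ∀ v ∈ S, G.Adj q v)
    (hv : v ∈ S) (hlow : IsLow G α v) (hvw : G.Adj v w) : w ∈ S ∪ {h, q} := by
  have hnbrs : insert h (insert q (S.erase v)) = G.neighborFinset v := by
    refine eq_of_subset_of_card_le ?_ ?_
    · simp only [insert_subset_iff, mem_neighborFinset]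
      refine ⟨(hh v hv).symm, (hq v hv).symm, fun w hw => ?_⟩
      exact (mem_neighborFinset ..).2 (hS hv (mem_of_mem_erase hw) (ne_of_mem_erase hw).symm)
    · rw [card_neighborFinset_eq_degree, card_insert_of_notMem (by simp [hhq, hhS]),
        card_insert_of_notMem (by simp [hqS]), card_erase_add_one hv, hcard]
      exact hlow
  have hw := hnbrs ▸ (mem_neighborFinset ..).2 hvw
  simp only [mem_insert, mem_erase, mem_union, mem_singleton] at hw ⊢
  tauto

/- Otherwise `h` and `q` have at most four neighbours outside of `S`, so they can share a colour. -/
lemma adj_of_isClique (hG : IsEmpty (G.Coloring α)) (hfive : 5 ≤ Fintype.card α)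
    (hdeg : ∀ v, G.degree v ≤ Fintype.card α + 1) (c : (G.deleteIncidenceSet x).Coloring α)
    (hxS : x ∈ S) (hS : G.IsClique S) (hcard : #S + 1 = Fintype.card α)
    (hlow : ∀ v ∈ S, IsLow G α v) (hqS : q ∉ S) (hhS : h ∉ S) (hhq : h ≠ q)
    (hh : ∀ v ∈ S, G.Adj h v) (hq : ∀ v ∈ S, G.Adj q v) : G.Adj q h := by
  by_contra hqh
  have hout : ∀ v, (∀ w ∈ S, G.Adj v w) → #(G.neighborFinset v \ S) ≤ 2 := by
    intro v hv
    have hsub : S ⊆ G.neighborFinset v := fun w hw => (mem_neighborFinset ..).2 (hv w hw)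
    have hle := hdeg v
    rw [card_sdiff_of_subset hsub, card_neighborFinset_eq_degree]
    omega
  obtain ⟨j, hj⟩ : ∃ j, j ∉ ((G.neighborFinset h \ S) ∪ (G.neighborFinset q \ S)).image c := by
    by_contra! hcon
    have hle : Fintype.card α ≤ #(G.neighborFinset h \ S) + #(G.neighborFinset q \ S) := by
      rw [← card_univ, ← eq_univ_iff_forall.2 hcon]
      exact card_image_le.trans (card_union_le ..)
    have hhout := hout h hh
    have hqout := hout q hq
    omega
  refine not_isEmpty_iff.2 (nonempty_coloring_of_independent c (I := {h, q}) hxS ?_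
    (fun v hv w => mem_of_adj_of_isLow hS hcard hqS hhS hhq hh hq hv (hlow v hv))
    (by omega) j ?_) hG
  · have hhq : ¬ G.Adj h q := fun hadj => hqh hadj.symm
    simp [hqh, hhq]
  · rintro v hv w hvw hwS rfl
    refine hj (mem_image_of_mem c ?_)
    simp only [mem_insert, mem_singleton] at hv
    simp only [mem_union, mem_sdiff, mem_neighborFinset, hwS, not_false_eq_true, and_true]
    rcases hv with rfl | rfl
    · exact .inl hvw
    · exact .inr hvw

lemma adj_of_mem_isNClique (hG : IsEmpty (G.Coloring α)) (hfive : 5 ≤ Fintype.card α)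
    (hdeg : ∀ v, G.degree v ≤ Fintype.card α + 1)
    (hlow : ∀ v w, G.Adj v w → IsLow G α v ∨ IsLow G α w)
    (c : (G.deleteIncidenceSet x).Coloring α) (hx : IsLow G α x) (hxN : x ∈ N)
    (hN : G.IsNClique (Fintype.card α) N) (hqN : q ∉ N) (hq : ∀ v ∈ N, IsLow G α v → G.Adj q v)
    (hh : h ∈ N) : G.Adj q h := by
  by_cases hhlow : IsLow G α h
  · exact hq h hh hhlow
  have hadj : ∀ v ∈ N.erase h, G.Adj h v := fun v hv =>
    hN.isClique hh (mem_of_mem_erase hv) (ne_of_mem_erase hv).symm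
  have hNlow : ∀ v ∈ N.erase h, IsLow G α v := fun v hv => (hlow h v (hadj v hv)).resolve_left hhlow
  refine adj_of_isClique hG hfive hdeg c (mem_erase.2 ⟨?_, hxN⟩)
    (hN.isClique.subset (coe_subset.2 (erase_subset _ _))) ?_ hNlow
    (fun hmem => hqN (mem_of_mem_erase hmem)) (notMem_erase _ _) ?_ hadj
    (fun v hv => hq v (mem_of_mem_erase hv) (hNlow v hv))
  · rintro rfl
    exact hhlow hx
  · rw [card_erase_add_one hh, hN.card_eq]
  · rintro rfl
    exact hqN hh

end Clique

section Main

variable {V α : Type*} [Fintype V] [Fintype α] {G : SimpleGraph V} {κ : α → Bool} {t : V → Bool}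
  {x : V}

lemma exists_isLowMozhan (hG : OreSetting G κ) (hdeg : ∀ v, G.degree v ≤ Fintype.card α + 1)
    (h : Splits G κ x t) : ∃ z t', IsLowMozhan G κ z t' := by
  obtain ⟨x, t, hx⟩ := exists_isMozhan h
  by_cases hlow : IsLow G α x
  · exact ⟨x, t, hx, hlow⟩
  obtain ⟨i, hi⟩ : ∃ i, #(partNbrs G t x i) = #(palette κ i) := by
    have hle := hx.splits.card_palette_le hG.isEmpty_coloring
    have hsum := sum_card_partNbrs (G := G) (t := t) (v := x) ▸ hdeg x
    rw [← sum_card_palette (κ := κ), Fintype.sum_bool, Fintype.sum_bool] at hsum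
    by_contra! hne
    have htrue := (hle true).lt_of_ne (hne true).symm
    have hfalse := (hle false).lt_of_ne (hne false).symm
    omega
  have hpos : 0 < #(partNbrs G t x i) := by
    have := hG.card_palette_false
    have := hG.three_le_card_palette_true
    cases i <;> omega
  obtain ⟨w, hw⟩ := card_pos.1 hpos
  obtain ⟨hxw, rfl⟩ := mem_partNbrs.1 hw
  have hdegx : (partGraph G (update t x (t w))).degree x = #(palette κ (update t x (t w) x)) := by
    rw [degree_partGraph, update_self, partNbrs_congr fun _ hv => update_of_ne hv .., hi]
  have hw := (hx.update_part (t w)).swap hG.isEmpty_coloring hdegx (y := w)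
    ⟨hxw, by rw [update_self, update_of_ne hxw.ne']⟩
  exact ⟨w, _, hw.1, (hG.isLow_or_isLow x w hxw).resolve_left hlow⟩

/- A low edge `zy` of the part `false` lies in a triangle `zyq`. With the neighbours of `z` in the
part `true`, this makes the clique. -/
theorem exists_isNClique (hG : OreSetting G κ) (hdeg : ∀ v, G.degree v ≤ Fintype.card α + 1)
    (h : Splits G κ x t) : ∃ s, G.IsNClique (Fintype.card α + 1) s := by
  obtain ⟨x, t, hx⟩ := exists_isLowMozhan hG hdeg h
  replace hx := hx.update_part false
  obtain ⟨z, y, hxz, hzy, hlowz, hlowy⟩ := hx.exists_adj_isLow hG (update_self ..)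
  have hz := hx.of_reachable_of_isLow hG hxz hlowz
  have hy := hx.of_reachable_of_isLow hG (hxz.trans hzy.reachable) hlowy
  have htz := (part_eq_of_reachable hxz).trans (update_self ..)
  set t := update t x false
  have hdisj := hz.not_disjoint_partNbrs hG hy htz hzy
  obtain ⟨q, hzq, hyq, hqlow⟩ := hz.exists_common_nbr hG hy htz hzy hdisj
  set T := partNbrs G t z true
  have hTy := hz.partNbrs_subset_of_not_disjoint hG hy (hzy.2 ▸ htz) hdisj
  have hT : G.IsNClique #(palette κ true) T :=
    ⟨fun a ha b hb => hz.adj_of_mem_partNbrs hG ha hb,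
      hz.splits.card_partNbrs_of_degree_le hG.isEmpty_coloring hlowz true⟩
  have hcard : Fintype.card α = #(palette κ true) + 1 + 1 := by
    rw [← sum_card_palette (κ := κ), Fintype.sum_bool, hG.card_palette_false]
  have hfive : 5 ≤ Fintype.card α := by
    have := hG.three_le_card_palette_true
    omega
  have hN : G.IsNClique (Fintype.card α) (insert z (insert y T)) := by
    rw [hcard]
    refine (hT.insert fun b hb => (mem_partNbrs.1 (hTy hb)).1).insert ?_
    exact forall_mem_insert .. |>.2 ⟨hzy.1, fun b hb => (mem_partNbrs.1 hb).1⟩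
  obtain ⟨c, -⟩ := hz.splits
  refine ⟨_, hN.insert (a := q) fun b => adj_of_mem_isNClique hG.isEmpty_coloring hfive hdeg
    hG.isLow_or_isLow c hlowz (mem_insert_self ..) hN ?_ ?_⟩
  · have htq : t q = false := hzq.2 ▸ htz
    simp [hzq.ne', hyq.ne', T, mem_partNbrs, htq]
  · simp only [forall_mem_insert]
    exact ⟨fun _ => hzq.1.symm, fun _ => hyq.1.symm, hqlow⟩

omit [Fintype V] [Fintype α] in
lemma nonempty_coloring_deleteIncidenceSet
    (hG : Minimal (fun H : SimpleGraph V => IsEmpty (H.Coloring α)) G) {w : V} (hxw : G.Adj x w) :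
    Nonempty ((G.deleteIncidenceSet x).Coloring α) := by
  by_contra! hempty
  exact (deleteIncidenceSet_adj.1 (hG.2 hempty (deleteIncidenceSet_le G x) hxw)).2.1 rfl

lemma exists_card_palette (hα : 5 ≤ Fintype.card α) :
    ∃ κ : α → Bool, #(palette κ false) = 2 ∧ 3 ≤ #(palette κ true) := by
  obtain ⟨s, -, hs⟩ := exists_subset_card_eq (show 2 ≤ #(univ : Finset α) by rw [card_univ]; omega)
  let κ : α → Bool := fun j => decide (j ∉ s)
  have hfalse : palette κ false = s := by
    ext j
    simp [κ, mem_palette]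
  have hsum := sum_card_palette (κ := κ)
  rw [Fintype.sum_bool, hfalse, hs] at hsum
  exact ⟨κ, hfalse ▸ hs, by omega⟩

/- In a minimal noncolourable subgraph every degree that is not zero is at least the number of
colours. -/
theorem exists_isNClique_of_isEmpty_coloring (hα : 5 ≤ Fintype.card α)
    (hdeg : ∀ v w, G.Adj v w → G.degree v + G.degree w ≤ 2 * Fintype.card α + 1)
    (hG : IsEmpty (G.Coloring α)) : ∃ s, G.IsNClique (Fintype.card α + 1) s := by
  obtain ⟨H, hHG, hH⟩ := exists_minimal_le_of_wellFoundedLT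
    (fun H : SimpleGraph V => IsEmpty (H.Coloring α)) G hG
  have hlower : ∀ v w, H.Adj v w → Fintype.card α ≤ H.degree v := fun v w hvw =>
    (nonempty_coloring_deleteIncidenceSet hH hvw).elim (card_le_degree hH.1)
  have hore : ∀ v w, H.Adj v w → H.degree v + H.degree w ≤ 2 * Fintype.card α + 1 :=
    fun v w hvw => (add_le_add (degree_le_of_le hHG) (degree_le_of_le hHG)).trans
      (hdeg v w (hHG hvw))
  obtain ⟨κ, hfalse, htrue⟩ := exists_card_palette hα
  have hsetting : OreSetting H κ := ⟨hH.1, hfalse, htrue, fun v w hvw => by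
    have := hore v w hvw
    unfold IsLow
    omega⟩
  have hupper : ∀ v, H.degree v ≤ Fintype.card α + 1 := fun v => by
    rcases (H.neighborFinset v).eq_empty_or_nonempty with hv | ⟨w, hvw⟩
    · simp [← card_neighborFinset_eq_degree, hv]
    · rw [mem_neighborFinset] at hvw
      have := hore v w hvw
      have := hlower w v hvw.symm
      omega
  obtain ⟨x, w, hxw⟩ : ∃ x w, H.Adj x w := by
    by_contra! hedge
    have : Nonempty α := Fintype.card_pos_iff.1 (by omega)
    exact hH.1.false (.mk (fun _ => Classical.arbitrary α) fun hvw => absurd hvw (hedge _ _))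
  obtain ⟨c⟩ := nonempty_coloring_deleteIncidenceSet hH hxw
  obtain ⟨s, hs⟩ := exists_isNClique hsetting hupper ⟨c, fun v _ => (rfl : κ (c v) = (κ ∘ c) v)⟩
  exact ⟨s, hs.mono hHG⟩

end Main

end MozhanPartition

/-- Corollary O: if `6 ≤ χ(G) = ⌊θ(G)/2⌋ + 1`, where `θ(G)` is the
Ore-degree of `G` (the maximum over edges `xy` of `d(x) + d(y)`),
then `G` contains the complete graph `K_{χ(G)}`. -/
theorem stmt_2 {V : Type*} [Fintype V] [DecidableEq V] (G : SimpleGraph V)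
    [DecidableRel G.Adj] (k θ : ℕ)
    (hθub : ∀ x y : V, G.Adj x y → G.degree x + G.degree y ≤ θ)
    (hθmax : ∃ x y : V, G.Adj x y ∧ G.degree x + G.degree y = θ)
    (hk : G.chromaticNumber = k)
    (h6 : 6 ≤ k) (hkθ : k = θ / 2 + 1) :
    ∃ s : Finset V, G.IsNClique k s := by
  obtain ⟨n, rfl⟩ : ∃ n, k = n + 1 := ⟨θ / 2, hkθ⟩
  have hcolor : IsEmpty (G.Coloring (Fin n)) := by
    rw [← not_nonempty_iff]
    intro hcol
    have hle := hk ▸ Colorable.chromaticNumber_le hcol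
    norm_cast at hle
    omega
  have hclique := MozhanPartition.exists_isNClique_of_isEmpty_coloring (G := G) (α := Fin n)
  simp only [Fintype.card_fin] at hclique
  refine hclique (by omega) (fun v w hvw => ?_) hcolor
  have hle := hθub v w hvw
  convert (by omega : G.degree v + G.degree w ≤ 2 * n + 1)
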